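/- Let p ∈ (1,∞) and C_p = (1/2 + ((p+1)/p)·(1 + 2^{p/(p+1)} - 2^{1/(p+1)})/4)^{-1}. Then for all d ∈ ℕ and ε ∈ (0,1/2), the inverse of the L_p-discrepancy satisfies N_p^{disc}(ε,d) ≥ C_p^d·(1-2ε); in particular the L_p-discrepancy suffers from the curse of dimensionality. -/

import Mathlib

open MeasureTheory

/-- The `L_p`-discrepancy of an `N`-element point set `P` in `[0,1)^d`. -/
noncomputable def LpDiscrepancy (p : ℝ) (d N : ℕ) (P : Fin N → (Fin d → ℝ)) : ℝ :=
  (∫ t in Set.Icc (0 : Fin d → ℝ) 1,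
      |((Finset.univ.filter (fun k => ∀ j, P k j < t j)).card : ℝ) / N - ∏ j, t j| ^ p)
    ^ (1 / p)

/-- The `N`-th minimal `L_p`-discrepancy in dimension `d`. -/
noncomputable def minLpDiscrepancy (p : ℝ) (N d : ℕ) : ℝ :=
  sInf ((fun P => LpDiscrepancy p d N P) ''
    {P : Fin N → Fin d → ℝ | ∀ k j, P k j ∈ Set.Ico (0:ℝ) 1})

/-- The inverse of the `N`-th minimal `L_p`-discrepancy; the initial discrepancy is
`1/(p+1)^{d/p}`. -/
noncomputable def invLpDiscrepancy (p ε : ℝ) (d : ℕ) : ℕ :=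
  sInf {N : ℕ | 0 < N ∧ minLpDiscrepancy p N d ≤ ε * (1 / (p + 1) ^ ((d : ℝ) / p))}


lemma tan_log (z z0 : ℝ) (hz : 0 < z) (h0 : 0 < z0) : Real.log z ≤ Real.log z0 + z / z0 - 1 := by
  have h := Real.log_le_sub_one_of_pos (div_pos hz h0)
  rw [Real.log_div hz.ne' h0.ne'] at h
  linarith

lemma log_two_pow (k : ℕ) : Real.log (1 / 2 ^ k) = - (k * Real.log 2) := by
  rw [one_div, Real.log_inv, Real.log_pow]

lemma big_log (z : ℝ) (hz : 0 < z) (h2 : z ≤ 1 / 2) :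
    4 ≤ (- Real.log z) * (1 + 9 * z + 10 * z ^ 2) := by
  have l2 := Real.log_two_gt_d9
  have key : ∀ c : ℝ, c ≤ - Real.log z → 4 ≤ c * (1 + 9 * z + 10 * z ^ 2) →
      4 ≤ (- Real.log z) * (1 + 9 * z + 10 * z ^ 2) := by
    intro c hc h
    exact h.trans (mul_le_mul_of_nonneg_right hc (by positivity))
  have T : ∀ k : ℕ, k * 0.693 + 1 - 2 ^ k * z ≤ - Real.log z := by
    intro k
    have h := tan_log z (1 / 2 ^ k) hz (by positivity)
    rw [log_two_pow] at h
    have h3 : z / (1 / 2 ^ k) = 2 ^ k * z := by field_simp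
    have h4 : (k : ℝ) * 0.693 ≤ k * Real.log 2 :=
      mul_le_mul_of_nonneg_left (by linarith) (by positivity)
    linarith
  by_cases h5 : z ≤ 1 / 2 ^ 6
  · have h := Real.log_le_log hz h5
    rw [log_two_pow] at h
    refine key 4 (by push_cast at h; linarith) (by nlinarith)
  push Not at h5
  by_cases h4 : z ≤ 0.045
  · refine key _ (T 5) ?_
    norm_num at h5 ⊢
    nlinarith [mul_nonneg (sub_nonneg.2 h5.le) (sub_nonneg.2 h4),
      mul_nonneg (mul_nonneg (sub_nonneg.2 h5.le) (sub_nonneg.2 h4)) hz.le]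
  push Not at h4
  by_cases h3 : z ≤ 0.09
  · refine key _ (T 4) ?_
    norm_num at h4 ⊢
    nlinarith [mul_nonneg (sub_nonneg.2 h4.le) (sub_nonneg.2 h3),
      mul_nonneg (mul_nonneg (sub_nonneg.2 h4.le) (sub_nonneg.2 h3)) hz.le]
  push Not at h3
  by_cases h6 : z ≤ 0.18
  · refine key _ (T 3) ?_
    norm_num at h3 ⊢
    nlinarith [mul_nonneg (sub_nonneg.2 h3.le) (sub_nonneg.2 h6),
      mul_nonneg (mul_nonneg (sub_nonneg.2 h3.le) (sub_nonneg.2 h6)) hz.le]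
  push Not at h6
  by_cases h7 : z ≤ 0.36
  · refine key _ (T 2) ?_
    norm_num at h6 ⊢
    nlinarith [mul_nonneg (sub_nonneg.2 h6.le) (sub_nonneg.2 h7),
      mul_nonneg (mul_nonneg (sub_nonneg.2 h6.le) (sub_nonneg.2 h7)) hz.le]
  push Not at h7
  · refine key _ (T 1) ?_
    norm_num at h7 ⊢
    nlinarith [mul_nonneg (sub_nonneg.2 h7.le) (sub_nonneg.2 h2),
      mul_nonneg (mul_nonneg (sub_nonneg.2 h7.le) (sub_nonneg.2 h2)) hz.le]

lemma entropy_bd (z : ℝ) (hz : 0 < z) (h1 : z < 1) :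
    (1 - z) * Real.log (1 - z) - z * Real.log z ≤ (1 - z) / 5 := by
  have l2 := Real.log_two_gt_d9
  have l2' := Real.log_two_lt_d9
  have h1' : 0 < 1 - z := by linarith
  have T : ∀ k : ℕ, - (z * Real.log z) ≤ z * (k * 0.6932 - 1) + 1 / 2 ^ k := by
    intro k
    have h := tan_log (1 / 2 ^ k) z (by positivity) hz
    rw [log_two_pow] at h
    have h4 : (k : ℝ) * Real.log 2 ≤ k * 0.6932 :=
      mul_le_mul_of_nonneg_left (by linarith) (by positivity)
    have h5 : - Real.log z ≤ k * 0.6932 + 1 / 2 ^ k / z - 1 := by linarith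
    have := mul_le_mul_of_nonneg_left h5 hz.le
    have e : z * (k * 0.6932 + 1 / 2 ^ k / z - 1) = z * (k * 0.6932 - 1) + 1 / 2 ^ k := by
      field_simp
      ring
    linarith
  have S : ∀ c : ℝ, Real.log (1 - z) ≤ c → (1 - z) * Real.log (1 - z) ≤ (1 - z) * c :=
    fun c hc => mul_le_mul_of_nonneg_left hc h1'.le
  by_cases ha : z ≤ 0.16
  · have := T 3
    have := S (-z) (by have := Real.log_le_sub_one_of_pos h1'; linarith)
    norm_num at *
    nlinarith
  push Not at ha
  by_cases hb : z ≤ 0.42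
  · have l34 : Real.log (3 / 4) ≤ -0.285 := by
      have h : Real.log ((3 / 4) ^ 17) ≤ Real.log (1 / 2 ^ 7) :=
        Real.log_le_log (by positivity) (by norm_num)
      rw [log_two_pow, Real.log_pow] at h
      push_cast at h
      linarith
    have s := S _ (tan_log (1 - z) (3 / 4) h1' (by norm_num))
    have s' : (1 - z) * (Real.log (3 / 4) + (1 - z) / (3 / 4) - 1) ≤
      (1 - z) * (-0.285 + (1 - z) / (3 / 4) - 1) :=
        mul_le_mul_of_nonneg_left (by linarith) h1'.le
    by_cases hb' : z ≤ 0.18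
    · have t := T 3
      norm_num at *
      nlinarith [mul_nonneg (sub_nonneg.2 ha.le) (sub_nonneg.2 hb')]
    push Not at hb'
    have t := T 2
    clear ha
    have ha := hb'
    norm_num at *
    nlinarith [mul_nonneg (sub_nonneg.2 ha.le) (sub_nonneg.2 hb)]
  push Not at hb
  by_cases hc : z ≤ 0.8
  · have t := T 1
    have s := S _ (tan_log (1 - z) (1 / 2 ^ 1) h1' (by norm_num))
    rw [log_two_pow] at s
    have s' : (1 - z) * (-((1 : ℕ) * Real.log 2) + (1 - z) / (1 / 2 ^ 1) - 1) ≤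
      (1 - z) * (-0.693 + (1 - z) / (1 / 2 ^ 1) - 1) :=
        mul_le_mul_of_nonneg_left (by push_cast; linarith) h1'.le
    norm_num at *
    nlinarith [mul_nonneg (sub_nonneg.2 hb.le) (sub_nonneg.2 hc)]
  push Not at hc
  · have t := T 0
    have s := S (- 0.8) (by
      have h : Real.log (1 - z) ≤ Real.log (1 / 2 ^ 2) :=
        Real.log_le_log h1' (by norm_num at *; linarith)
      rw [log_two_pow] at h
      push_cast at h
      linarith)
    norm_num at *
    nlinarith

lemma small_p (p y : ℝ) (hp : 1 ≤ p) (hy : 0 < y) (hy1 : y < 1) :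
    p * Real.log (1 - y ^ p) ≤ Real.log (1 - y) + (p - 1) / 5 := by
  have hd : ∀ q ∈ Set.Ici (1:ℝ), HasDerivAt (fun q : ℝ => p * 0 + (q / 5 - q * Real.log (1 - y ^ q)))
      (1 / 5 - (Real.log (1 - y ^ q) - y ^ q * Real.log (y ^ q) / (1 - y ^ q))) q := by
    intro q hq
    have hq0 : 0 < q := lt_of_lt_of_le one_pos hq
    have hz1 : y ^ q < 1 := Real.rpow_lt_one hy.le hy1 hq0
    have h1 : HasDerivAt (fun q : ℝ => y ^ q) (y ^ q * Real.log y) q := by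
      simpa using (Real.hasStrictDerivAt_const_rpow hy q).hasDerivAt
    have h2 := ((h1.const_sub 1).log (by linarith))
    have h3 := ((hasDerivAt_id q).div_const 5).sub ((hasDerivAt_id q).mul h2)
    have h4 := h3.const_add (p * 0)
    refine h4.congr_deriv ?_
    have : 1 - y ^ q ≠ 0 := by linarith
    rw [Real.log_rpow hy]
    simp only [id]
    field_simp
    ring
  have hm : MonotoneOn (fun q : ℝ => p * 0 + (q / 5 - q * Real.log (1 - y ^ q))) (Set.Ici 1) := by
    apply monotoneOn_of_deriv_nonneg (convex_Ici 1)
    · exact fun q hq => (hd q hq).continuousAt.continuousWithinAt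
    · intro q hq
      rw [interior_Ici] at hq
      exact (hd q (Set.mem_Ici.2 (le_of_lt hq))).differentiableAt.differentiableWithinAt
    · intro q hq
      rw [interior_Ici] at hq
      have hq1 : 1 < q := hq
      rw [(hd q hq1.le).deriv]
      have hz1 : y ^ q < 1 := Real.rpow_lt_one hy.le hy1 (by linarith)
      have hz0 : 0 < y ^ q := Real.rpow_pos_of_pos hy q
      have := entropy_bd _ hz0 hz1
      have h1' : 0 < 1 - y ^ q := by linarith
      have e : 1 / 5 - (Real.log (1 - y ^ q) - y ^ q * Real.log (y ^ q) / (1 - y ^ q)) =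
        ((1 - y ^ q) / 5 - ((1 - y ^ q) * Real.log (1 - y ^ q) - y ^ q * Real.log (y ^ q)))
          / (1 - y ^ q) := by
        field_simp
      rw [e]
      exact div_nonneg (by linarith) h1'.le
  have := hm (Set.mem_Ici.2 le_rfl) (Set.mem_Ici.2 hp) hp
  simp only [Real.rpow_one] at this
  linarith

lemma large_p (p y : ℝ) (hp : 5 ≤ p) (hy : 0 < y) (hy1 : y < 1) :
    (1 - y ^ p) ^ p ≤ (1 - y) * (1 + p / 4) := by
  have hp0 : 0 < p := by linarith
  have hz1 : y ^ p < 1 := Real.rpow_lt_one hy.le hy1 hp0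
  have hz0 : 0 < y ^ p := Real.rpow_pos_of_pos hy p
  have hlog : Real.log (y ^ p) = p * Real.log y := Real.log_rpow hy p
  have bern : 1 - y ^ p ≤ p * (1 - y) := by
    have := one_add_mul_self_le_rpow_one_add (s := y - 1) (by linarith) (show 1 ≤ p by linarith)
    rw [show 1 + (y - 1) = y by ring] at this
    linarith
  set z := y ^ p with hz
  by_cases h : 1 / 2 ≤ z
  · have e : (1 - z) ^ p = (1 - z) * (1 - z) ^ (p - 1) := by
      rw [Real.rpow_sub_one (by linarith)]
      have : 1 - z ≠ 0 := by linarith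
      field_simp
    have h1 : (1 - z) ^ (p - 1) ≤ (1 / 2 : ℝ) ^ (p - 1) :=
      Real.rpow_le_rpow (by linarith) (by linarith) (by linarith)
    have h2 : (1 / 2 : ℝ) ^ (p - 1) ≤ (1 / 2 : ℝ) ^ (4 : ℝ) :=
      Real.rpow_le_rpow_of_exponent_ge (by norm_num) (by norm_num) (by linarith)
    have h3 : (1 / 2 : ℝ) ^ (4 : ℝ) = 1 / 16 := by
      rw [show (4 : ℝ) = (4 : ℕ) by norm_num, Real.rpow_natCast]; norm_num
    rw [e]
    calc (1 - z) * (1 - z) ^ (p - 1) ≤ (p * (1 - y)) * (1 / 16) := by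
          apply mul_le_mul bern (by linarith) (Real.rpow_nonneg (by linarith) _)
          nlinarith
      _ ≤ _ := by nlinarith
  · push Not at h
    have hl := big_log z hz0 h.le
    set l := - Real.log z with hldef
    have hlpos : 0 < l := by
      have := Real.log_neg hz0 hz1
      linarith
    have hyl : l / (p + l) ≤ 1 - y := by
      have h1 : y = Real.exp (-(l / p)) := by
        rw [hldef, hlog]
        rw [show -(-(p * Real.log y) / p) = Real.log y by field_simp, Real.exp_log hy]
      have h2 := Real.add_one_le_exp (l / p)
      rw [h1, Real.exp_neg]
      have h3 : (Real.exp (l / p))⁻¹ ≤ (l / p + 1)⁻¹ := inv_anti₀ (by positivity) h2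
      have h4 : (l / p + 1)⁻¹ = 1 - l / (p + l) := by field_simp; ring
      linarith
    have he : (1 - z) ^ p ≤ (1 + p * z + (p * z) ^ 2 / 2)⁻¹ := by
      have h1 : 1 - z ≤ Real.exp (-z) := by have := Real.add_one_le_exp (-z); linarith
      have h2 : (1 - z) ^ p ≤ Real.exp (-z) ^ p := Real.rpow_le_rpow (by linarith) h1 hp0.le
      have h3 : Real.exp (-z) ^ p = (Real.exp (p * z))⁻¹ := by
        rw [← Real.exp_mul, ← Real.exp_neg]; ring_nf
      rw [h3] at h2
      exact h2.trans (inv_anti₀ (by positivity) (Real.quadratic_le_exp_of_nonneg (by positivity)))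
    refine he.trans ?_
    have : (1 + p * z + (p * z) ^ 2 / 2)⁻¹ ≤ l / (p + l) * (1 + p / 4) := by
      rw [inv_le_iff_one_le_mul₀ (by positivity)]
      rw [div_mul_eq_mul_div, div_mul_eq_mul_div, le_div_iff₀ (by positivity), one_mul]
      have a1 : 1 ≤ l * (1 / 4 + z + p * z / 4 + p * z ^ 2 / 2) := by
        have : 1 / 4 + 9 / 4 * z + 10 / 4 * z ^ 2 ≤ 1 / 4 + z + p * z / 4 + p * z ^ 2 / 2 := by
          nlinarith [mul_nonneg (sub_nonneg.2 hp) hz0.le, mul_nonneg (sub_nonneg.2 hp) (sq_nonneg z)]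
        have := mul_le_mul_of_nonneg_left this hlpos.le
        linarith
      have a2 := mul_le_mul_of_nonneg_left a1 hp0.le
      have a3 : 0 ≤ l * (p ^ 3 * z ^ 2 / 8) := by positivity
      nlinarith
    exact this.trans (mul_le_mul_of_nonneg_right hyl (by positivity))

lemma psi_bd (x : ℝ) (h0 : 0 ≤ x) (h1 : x ≤ 1 / 2) :
    1 - 2 * x - x * (1 / 2 - x) / 4 ≤ (2 : ℝ) ^ (1 - x) - 2 ^ x := by
  have l2 := Real.log_two_lt_d9
  have l2' := Real.log_two_gt_d9
  have key : ConcaveOn ℝ (Set.Icc (0 : ℝ) (1 / 2))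
      (fun x : ℝ => (2 : ℝ) ^ (1 - x) - 2 ^ x - (1 - 2 * x - x * (1 / 2 - x) / 4)) := by
    have d1 : ∀ x : ℝ, HasDerivAt (fun x : ℝ => (2 : ℝ) ^ x) ((2 : ℝ) ^ x * Real.log 2) x := by
      intro x
      simpa using (Real.hasStrictDerivAt_const_rpow (show (0:ℝ) < 2 by norm_num) x).hasDerivAt
    have d2 : ∀ x : ℝ, HasDerivAt (fun x : ℝ => (2 : ℝ) ^ (1 - x))
        (- ((2 : ℝ) ^ (1 - x) * Real.log 2)) x := by
      intro x
      have := (d1 (1 - x)).comp x ((hasDerivAt_id x).const_sub 1)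
      simpa [Function.comp_def] using this
    refine concaveOn_of_hasDerivWithinAt2_nonpos (convex_Icc _ _)
      (f' := fun x => - ((2 : ℝ) ^ (1 - x) * Real.log 2) - (2 : ℝ) ^ x * Real.log 2
        + 2 + (1 / 2 - 2 * x) / 4)
      (f'' := fun x => ((2 : ℝ) ^ (1 - x) * Real.log 2) * Real.log 2
        - (2 : ℝ) ^ x * Real.log 2 * Real.log 2 - 1 / 2) ?_ ?_ ?_ ?_
    · intro x _
      have hc : ContinuousAt (fun x : ℝ => (2 : ℝ) ^ (1 - x) - 2 ^ x -
        (1 - 2 * x - x * (1 / 2 - x) / 4)) x := by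
        refine ((d2 x).continuousAt.sub (d1 x).continuousAt).sub ?_
        fun_prop
      exact hc.continuousWithinAt
    · intro x _
      have hq : HasDerivAt (fun x : ℝ => 1 - 2 * x - x * (1 / 2 - x) / 4)
          (-2 - (1 / 2 - 2 * x) / 4) x := by
        have := (((hasDerivAt_id x).const_mul 2).const_sub 1).sub
          (((hasDerivAt_id x).mul ((hasDerivAt_id x).const_sub (1/2))).div_const 4)
        refine this.congr_deriv ?_
        simp only [id]
        ring
      refine (((d2 x).sub (d1 x)).sub hq).hasDerivWithinAt.congr_deriv ?_
      ring
    · intro x _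
      have hq : HasDerivAt (fun x : ℝ => (1 / 2 - 2 * x) / 4) (- 1 / 2) x := by
        have := (((hasDerivAt_id x).const_mul 2).const_sub (1/2)).div_const 4
        refine this.congr_deriv ?_
        norm_num
      refine (((((d2 x).mul_const _).neg.sub ((d1 x).mul_const _)).add_const 2).add
        hq).hasDerivWithinAt.congr_deriv ?_
      ring
    · intro x hx
      rw [interior_Icc] at hx
      have a1 : (2 : ℝ) ^ (1 - x) ≤ 2 := by
        calc (2 : ℝ) ^ (1 - x) ≤ 2 ^ (1 : ℝ) :=
              Real.rpow_le_rpow_of_exponent_le (by norm_num) (by linarith [hx.1])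
          _ = 2 := Real.rpow_one 2
      have a2 : 1 ≤ (2 : ℝ) ^ x := Real.one_le_rpow (by norm_num) hx.1.le
      have a3 : Real.log 2 * Real.log 2 ≤ 1 / 2 := by nlinarith
      have a4 : 0 ≤ Real.log 2 * Real.log 2 := by positivity
      nlinarith
  have hc := key.2 (show (0:ℝ) ∈ Set.Icc (0 : ℝ) (1 / 2) by norm_num)
    (show (1/2:ℝ) ∈ Set.Icc (0 : ℝ) (1 / 2) by norm_num) 
    (show (0:ℝ) ≤ 1 - 2 * x by linarith) (show (0:ℝ) ≤ 2 * x by linarith) (by ring)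
  simp only [smul_eq_mul] at hc
  have e : (1 - 2 * x) * 0 + 2 * x * (1 / 2) = x := by ring
  rw [e] at hc
  have e2 : (1 - 1 / 2 : ℝ) = 1 / 2 := by norm_num
  rw [e2] at hc
  norm_num at hc
  linarith

noncomputable def KK (p : ℝ) : ℝ :=
  1 / 2 + ((p + 1) / p) * (1 + 2 ^ (p / (p + 1)) - 2 ^ (1 / (p + 1))) / 4

lemma KK_bd (p : ℝ) (hp : 1 < p) : 1 - (p - 1) / (32 * p * (p + 1)) ≤ KK p := by
  have hp0 : 0 < p := by linarith
  have h := psi_bd (1 / (p + 1)) (by positivity) (by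
    rw [div_le_div_iff₀ (by linarith) (by norm_num)]; linarith)
  have e : 1 - 1 / (p + 1) = p / (p + 1) := by field_simp; ring
  rw [e] at h
  unfold KK
  have h2 := mul_le_mul_of_nonneg_left h (show 0 ≤ (p + 1) / p / 4 by positivity)
  have e2 : (p + 1) / p / 4 * (1 - 2 * (1 / (p + 1)) - 1 / (p + 1) * (1 / 2 - 1 / (p + 1)) / 4)
     = 1 - (p - 1) / (32 * p * (p + 1)) - 1 / 2 - (p + 1) / p / 4 := by
    field_simp
    ring
  rw [e2] at h2
  have e3 : (p + 1) / p * (1 + 2 ^ (p / (p + 1)) - 2 ^ (1 / (p + 1))) / 4 =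
    (p + 1) / p / 4 + (p + 1) / p / 4 * ((2:ℝ) ^ (p / (p + 1)) - 2 ^ (1 / (p + 1))) := by ring
  rw [e3]
  linarith

lemma KK_pow (p : ℝ) (hp : 1 < p) : 0 < KK p ∧ 1 - (p - 1) / (32 * (p + 1)) ≤ KK p ^ p := by
  have hp0 : 0 < p := by linarith
  have h := KK_bd p hp
  have hs : (p - 1) / (32 * p * (p + 1)) < 1 := by
    rw [div_lt_one (by positivity)]; nlinarith
  refine ⟨by linarith, ?_⟩
  have b := one_add_mul_self_le_rpow_one_add (s := - ((p - 1) / (32 * p * (p + 1))))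
    (by linarith) hp.le
  have e : 1 + p * - ((p - 1) / (32 * p * (p + 1))) = 1 - (p - 1) / (32 * (p + 1)) := by
    field_simp
    ring
  rw [e] at b
  exact b.trans (Real.rpow_le_rpow (by linarith) (by linarith) hp0.le)

lemma phi_bd (p : ℝ) (hp : 1 ≤ p) (hp5 : p ≤ 5) :
    (p - 1) * Real.log (p + 1) - p * Real.log p ≤ - 0.2175 * (p - 1) := by
  have key : ConvexOn ℝ (Set.Icc (1 : ℝ) 5)
      (fun p : ℝ => (p - 1) * Real.log (p + 1) - p * Real.log p) := by
    have dl : ∀ x ∈ Set.Icc (1:ℝ) 5, HasDerivAt (fun p : ℝ => (p - 1) * Real.log (p + 1) - p * Real.log p)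
        (Real.log (x + 1) + (x - 1) / (x + 1) - Real.log x - 1) x := by
      intro x hx
      have hx0 : 0 < x := by linarith [hx.1]
      have := (((hasDerivAt_id x).sub_const 1).mul
        (((hasDerivAt_id x).add_const 1).log (by simp only [id]; linarith))).sub
        ((hasDerivAt_id x).mul ((hasDerivAt_id x).log hx0.ne'))
      refine this.congr_deriv ?_
      simp only [id]
      field_simp
      ring
    refine convexOn_of_hasDerivWithinAt2_nonneg (convex_Icc _ _)
      (f' := fun x => Real.log (x + 1) + (x - 1) / (x + 1) - Real.log x - 1)
      (f'' := fun x => (x - 1) / (x * (x + 1) ^ 2)) ?_ ?_ ?_ ?_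
    · exact fun x hx => (dl x hx).continuousAt.continuousWithinAt
    · exact fun x hx => (dl x (interior_subset hx)).hasDerivWithinAt
    · intro x hx
      have hx := interior_subset hx
      have hx0 : 0 < x := by linarith [hx.1]
      have := (((((hasDerivAt_id x).add_const 1).log (by simp only [id]; linarith)).add
        (((hasDerivAt_id x).sub_const 1).div ((hasDerivAt_id x).add_const 1)
          (by simp only [id]; linarith))).sub
        ((hasDerivAt_id x).log hx0.ne')).sub_const 1
      refine this.hasDerivWithinAt.congr_deriv ?_
      simp only [id]
      field_simp
      ring
    · intro x hx
      have hx := interior_subset hx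
      have hx0 : 0 < x := by linarith [hx.1]
      exact div_nonneg (by linarith [hx.1]) (by positivity)
  have hc := key.2 (show (1:ℝ) ∈ Set.Icc (1 : ℝ) 5 by norm_num)
    (show (5:ℝ) ∈ Set.Icc (1 : ℝ) 5 by norm_num) 
    (show (0:ℝ) ≤ (5 - p) / 4 by linarith) (show (0:ℝ) ≤ (p - 1) / 4 by linarith) (by ring)
  simp only [smul_eq_mul] at hc
  have e : (5 - p) / 4 * 1 + (p - 1) / 4 * 5 = p := by ring
  rw [e] at hc
  have num : 4 * Real.log 6 - 5 * Real.log 5 ≤ - 0.87 := by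
    have e1 : 4 * Real.log 6 - 5 * Real.log 5 = Real.log (6 ^ 4 / 5 ^ 5) := by
      rw [Real.log_div (by norm_num) (by norm_num), Real.log_pow, Real.log_pow]; norm_num
    rw [e1, Real.log_le_iff_le_exp (by norm_num)]
    have e2 : Real.exp (-0.87) = (Real.exp 1)⁻¹ * Real.exp 0.13 := by
      rw [← Real.exp_neg, ← Real.exp_add]; norm_num
    rw [e2]
    have a := Real.exp_one_lt_d9
    have b := Real.quadratic_le_exp_of_nonneg (show (0:ℝ) ≤ 0.13 by norm_num)
    have c : (2.7182818286 : ℝ)⁻¹ ≤ (Real.exp 1)⁻¹ := inv_anti₀ (Real.exp_pos _) a.le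
    calc (6 ^ 4 / 5 ^ 5 : ℝ) ≤ (2.7182818286 : ℝ)⁻¹ * (1 + 0.13 + 0.13 ^ 2 / 2) := by norm_num
      _ ≤ _ := by gcongr
  norm_num at hc num ⊢
  nlinarith

lemma main_ineq (p y : ℝ) (hp : 1 < p) (hy : 0 ≤ y) (hy1 : y < 1) :
    ((1 - y ^ p) * (1 + 1 / p)) ^ p ≤ (1 - (p - 1) / (32 * (p + 1))) * ((1 - y) * (p + 1)) := by
  have hp0 : 0 < p := by linarith
  have hz1 : y ^ p < 1 := Real.rpow_lt_one hy hy1 hp0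
  have hz0 : 0 ≤ y ^ p := Real.rpow_nonneg hy p
  have hu : (p - 1) / (32 * (p + 1)) < 1 := by
    rw [div_lt_one (by positivity)]; nlinarith
  rcases le_total p 5 with h5 | h5
  · have s : p * Real.log (1 - y ^ p) ≤ Real.log (1 - y) + (p - 1) / 5 := by
      rcases hy.eq_or_lt with h | h
      · rw [← h, Real.zero_rpow hp0.ne']
        simp
        linarith
      · exact small_p p y hp.le h hy1
    have f := phi_bd p hp.le h5
    have e : Real.log (1 + 1 / p) = Real.log (p + 1) - Real.log p := by
      rw [← Real.log_div (by linarith) hp0.ne']; congr 1; field_simp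
    have hw : - 0.0175 * (p - 1) ≤ Real.log (1 - (p - 1) / (32 * (p + 1))) := by
      have h := Real.one_sub_inv_le_log_of_pos (show 0 < 1 - (p - 1) / (32 * (p + 1)) by linarith)
      refine le_trans ?_ h
      have e : 1 - (1 - (p - 1) / (32 * (p + 1)))⁻¹ = - ((p - 1) / (31 * p + 33)) := by
        have : 1 - (p - 1) / (32 * (p + 1)) = (31 * p + 33) / (32 * (p + 1)) := by
          field_simp; ring
        rw [this]
        have : 31 * p + 33 ≠ 0 := by positivity
        field_simp
        ring
      rw [e]
      have : (p - 1) / (31 * p + 33) ≤ 0.0175 * (p - 1) := by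
        rw [div_le_iff₀ (by positivity)]
        nlinarith
      linarith
    rw [← Real.log_le_log_iff (Real.rpow_pos_of_pos (mul_pos (by linarith) (by positivity)) _)
      (mul_pos (by linarith) (mul_pos (by linarith) (by linarith))), Real.log_rpow
      (mul_pos (by linarith) (by positivity)), Real.log_mul (by linarith) (by positivity),
      Real.log_mul (by linarith) (mul_pos (by linarith) (by linarith)).ne',
      Real.log_mul (by linarith) (by linarith), e]
    norm_num at *
    nlinarith
  · have s : (1 - y ^ p) ^ p ≤ (1 - y) * (1 + p / 4) := by
      rcases hy.eq_or_lt with h | h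
      · rw [← h, Real.zero_rpow hp0.ne']
        simp
        linarith
      · exact large_p p y h5 h hy1
    have l1 : p * Real.log (1 + 1 / p) ≤ 1 - 1 / (2 * (p + 1)) := by
      have h1 : 0 ≤ Real.log (1 + 1 / p) :=
        Real.log_nonneg (by have : 0 < 1 / p := by positivity
                            linarith)
      have h2 := Real.self_le_sinh_iff.2 h1
      rw [Real.sinh_log (by positivity)] at h2
      have h3 := mul_le_mul_of_nonneg_left h2 hp0.le
      refine h3.trans (le_of_eq ?_)
      field_simp
      ring
    have l2 : (1 + 1 / p) ^ p ≤ 2.7183 * (2 * (p + 1) / (2 * p + 3)) := by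
      rw [Real.rpow_def_of_pos (by positivity), mul_comm]
      have e0 : Real.exp (1 - 1 / (2 * (p + 1))) = Real.exp 1 * (Real.exp (1 / (2 * (p + 1))))⁻¹ := by
        rw [← Real.exp_neg, ← Real.exp_add]; ring_nf
      have a := Real.exp_one_lt_d9
      have b := Real.add_one_le_exp (1 / (2 * (p + 1)))
      have c : (Real.exp (1 / (2 * (p + 1))))⁻¹ ≤ (1 / (2 * (p + 1)) + 1)⁻¹ :=
        inv_anti₀ (by positivity) b
      have d : (1 / (2 * (p + 1)) + 1)⁻¹ = 2 * (p + 1) / (2 * p + 3) := by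
        field_simp; ring
      rw [d] at c
      refine (Real.exp_le_exp.2 l1).trans ?_
      rw [e0]
      apply mul_le_mul (by linarith) c (by positivity) (by norm_num)
    rw [Real.mul_rpow (by linarith) (by positivity)]
    calc (1 - y ^ p) ^ p * (1 + 1 / p) ^ p
        ≤ ((1 - y) * (1 + p / 4)) * (2.7183 * (2 * (p + 1) / (2 * p + 3))) :=
          mul_le_mul s l2 (by positivity) (mul_nonneg (by linarith) (by positivity))
      _ = ((1 + p / 4) * (2.7183 * 2 / (2 * p + 3))) * ((1 - y) * (p + 1)) := by ring
      _ ≤ _ := by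
        apply mul_le_mul_of_nonneg_right _ (mul_nonneg (by linarith) (by linarith))
        have : (p - 1) / (32 * (p + 1)) ≤ 1 / 32 := by
          rw [div_le_div_iff₀ (by positivity) (by norm_num)]; linarith
        have : (1 + p / 4) * (2.7183 * 2 / (2 * p + 3)) ≤ 31 / 32 := by
          rw [← mul_div_assoc, div_le_div_iff₀ (by positivity) (by norm_num)]
          nlinarith
        linarith

lemma one_dim (p y : ℝ) (hp : 1 < p) (hy : 0 ≤ y) (hy1 : y < 1) :
    (1 - y ^ p) / p ≤ KK p * (1 - y) ^ (1 / p) * (p + 1) ^ (1 / p - 1) := by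
  have hp0 : 0 < p := by linarith
  have hz1 : y ^ p < 1 := Real.rpow_lt_one hy hy1 hp0
  obtain ⟨k0, k1⟩ := KK_pow p hp
  have m := main_ineq p y hp hy hy1
  have m2 : ((1 - y ^ p) * (1 + 1 / p)) ^ p ≤ KK p ^ p * ((1 - y) * (p + 1)) :=
    m.trans (mul_le_mul_of_nonneg_right k1 (mul_nonneg (by linarith) (by linarith)))
  have hb : 0 ≤ (1 - y ^ p) * (1 + 1 / p) := mul_nonneg (by linarith) (by positivity)
  have m3 := Real.rpow_le_rpow (Real.rpow_nonneg hb p) m2 (show 0 ≤ 1 / p by positivity)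
  rw [← Real.rpow_mul hb, mul_one_div_cancel hp0.ne', Real.rpow_one,
    Real.mul_rpow (by positivity) (mul_nonneg (by linarith) (by linarith)),
    ← Real.rpow_mul k0.le, mul_one_div_cancel hp0.ne', Real.rpow_one,
    Real.mul_rpow (by linarith) (by linarith)] at m3
  rw [Real.rpow_sub_one (by linarith)]
  have e : (1 - y ^ p) / p = (1 - y ^ p) * (1 + 1 / p) / (p + 1) := by
    field_simp
  rw [e, ← mul_div_assoc]
  apply div_le_div_of_nonneg_right _ (by linarith)
  linarith

lemma int_prod (d : ℕ) (f : Fin d → ℝ → ℝ) :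
    ∫ t in Set.Icc (0 : Fin d → ℝ) 1, ∏ j, f j (t j) =
      ∏ j, ∫ x in Set.Icc (0:ℝ) 1, f j x := by
  have h : (volume : Measure (Fin d → ℝ)).restrict (Set.Icc 0 1) =
      Measure.pi (fun _ : Fin d => (volume : Measure ℝ).restrict (Set.Icc 0 1)) := by
    rw [← Set.pi_univ_Icc, volume_pi, Measure.restrict_pi_pi]
    rfl
  rw [h]
  exact integral_fintype_prod_eq_prod (𝕜 := ℝ) (μ := fun _ : Fin d => (volume : Measure ℝ).restrict (Set.Icc 0 1)) f

lemma int_one (r y : ℝ) (hr : 0 ≤ r) (hy : 0 ≤ y) (hy1 : y ≤ 1) :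
    ∫ x in Set.Icc (0:ℝ) 1, (if y < x then x ^ r else 0) = (1 - y ^ (r + 1)) / (r + 1) := by
  have h1 : (fun x : ℝ => if y < x then x ^ r else 0) =
      (Set.Ioi y).indicator (fun x => x ^ r) := by
    ext x
    simp [Set.indicator]
  rw [h1, integral_indicator measurableSet_Ioi, Measure.restrict_restrict measurableSet_Ioi]
  have h2 : Set.Ioi y ∩ Set.Icc 0 1 = Set.Ioc y 1 := by
    ext x
    simp only [Set.mem_inter_iff, Set.mem_Ioi, Set.mem_Icc, Set.mem_Ioc]
    constructor
    · rintro ⟨a, b, c⟩; exact ⟨a, c⟩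
    · rintro ⟨a, c⟩; exact ⟨a, by linarith, c⟩
  rw [h2, ← intervalIntegral.integral_of_le hy1, integral_rpow (Or.inl (by linarith))]
  simp

lemma int_full (r : ℝ) (hr : 0 ≤ r) :
    ∫ x in Set.Icc (0:ℝ) 1, x ^ r = 1 / (r + 1) := by
  rw [integral_Icc_eq_integral_Ioc, ← intervalIntegral.integral_of_le zero_le_one,
    integral_rpow (Or.inl (by linarith)), Real.zero_rpow (by linarith)]
  simp

lemma nrm_eq {α : Type*} [MeasurableSpace α] {μ : Measure α} (p : ℝ) (hp : 1 < p) (f : α → ℝ)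
    (hf : MemLp f (ENNReal.ofReal p) μ) :
    (∫ x, |f x| ^ p ∂μ) ^ (1 / p) = (eLpNorm f (ENNReal.ofReal p) μ).toReal := by
  have hp0 : 0 < p := by linarith
  rw [hf.eLpNorm_eq_integral_rpow_norm (by simpa using hp0) ENNReal.ofReal_ne_top,
    ENNReal.toReal_ofReal hp0.le, ENNReal.toReal_ofReal, one_div]
  · rfl
  · exact Real.rpow_nonneg (integral_nonneg fun x => Real.rpow_nonneg (norm_nonneg _) _) _

lemma nrm_tri {α : Type*} [MeasurableSpace α] {μ : Measure α} (p : ℝ) (hp : 1 < p) (f g : α → ℝ)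
    (hf : MemLp f (ENNReal.ofReal p) μ) (hg : MemLp g (ENNReal.ofReal p) μ) :
    (∫ x, |f x| ^ p ∂μ) ^ (1 / p) ≤
      (∫ x, |f x - g x| ^ p ∂μ) ^ (1 / p) + (∫ x, |g x| ^ p ∂μ) ^ (1 / p) := by
  rw [nrm_eq p hp f hf, nrm_eq p hp g hg]
  have h := nrm_eq p hp (f - g) (hf.sub hg)
  simp only [Pi.sub_apply] at h
  rw [h, ← ENNReal.toReal_add (hf.sub hg).eLpNorm_ne_top hg.eLpNorm_ne_top]
  apply ENNReal.toReal_mono (ENNReal.add_ne_top.2 ⟨(hf.sub hg).eLpNorm_ne_top, hg.eLpNorm_ne_top⟩)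
  have := eLpNorm_add_le (p := ENNReal.ofReal p) (hf.sub hg).1 hg.1 (by
    rw [← ENNReal.ofReal_one]; exact ENNReal.ofReal_le_ofReal hp.le)
  simpa using this

lemma memLp_cube (d : ℕ) (q : ENNReal) (f : (Fin d → ℝ) → ℝ) (hf : Measurable f)
    (hb : ∀ t ∈ Set.Icc (0 : Fin d → ℝ) 1, |f t| ≤ 1) :
    MemLp f q (volume.restrict (Set.Icc (0 : Fin d → ℝ) 1)) := by
  have : IsFiniteMeasure (volume.restrict (Set.Icc (0 : Fin d → ℝ) 1)) :=
    ⟨by rw [Measure.restrict_apply_univ]; exact isCompact_Icc.measure_lt_top⟩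
  apply MemLp.of_bound hf.aestronglyMeasurable 1
  filter_upwards [ae_restrict_mem measurableSet_Icc] with t ht
  exact hb t ht

lemma cube_prod_mem (d : ℕ) (t : Fin d → ℝ) (ht : t ∈ Set.Icc (0 : Fin d → ℝ) 1) :
    0 ≤ ∏ j, t j ∧ ∏ j, t j ≤ 1 :=
  ⟨Finset.prod_nonneg fun j _ => ht.1 j, Finset.prod_le_one (fun j _ => ht.1 j) fun j _ => ht.2 j⟩

noncomputable def Fk {d : ℕ} (x t : Fin d → ℝ) : ℝ := ∏ j, if x j < t j then (1:ℝ) else 0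

lemma Fk_meas {d : ℕ} (x : Fin d → ℝ) : Measurable (Fk x) := by
  unfold Fk
  apply Finset.measurable_prod
  intro j _
  exact Measurable.ite (measurableSet_lt measurable_const (measurable_pi_apply j))
    measurable_const measurable_const

lemma Fk_mem {d : ℕ} (x t : Fin d → ℝ) : 0 ≤ Fk x t ∧ Fk x t ≤ 1 := by
  unfold Fk
  refine ⟨Finset.prod_nonneg fun j _ => ?_, Finset.prod_le_one (fun j _ => ?_) fun j _ => ?_⟩ <;>
    split_ifs <;> norm_num

lemma card_eq {d N : ℕ} (P : Fin N → Fin d → ℝ) (t : Fin d → ℝ) :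
    ((Finset.univ.filter (fun k => ∀ j, P k j < t j)).card : ℝ) = ∑ k, Fk (P k) t := by
  rw [Finset.card_filter]
  push_cast
  refine Finset.sum_congr rfl fun k _ => ?_
  unfold Fk
  rw [Finset.prod_ite_zero]
  simp

lemma int_Fk_pow (p : ℝ) (hp : 1 < p) {d : ℕ} (x : Fin d → ℝ)
    (hx : ∀ j, x j ∈ Set.Ico (0:ℝ) 1) :
    ∫ t in Set.Icc (0 : Fin d → ℝ) 1, |Fk x t| ^ p = ∏ j, (1 - x j) := by
  have h : ∀ t, |Fk x t| ^ p = ∏ j, (fun (j : Fin d) (s : ℝ) => if x j < s then s ^ (0:ℝ) else 0) j (t j) := by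
    intro t
    rw [abs_of_nonneg (Fk_mem x t).1]
    unfold Fk
    rw [← Real.finsetProd_rpow _ _ (fun j _ => by split_ifs <;> norm_num)]
    refine Finset.prod_congr rfl fun j _ => ?_
    have : p ≠ 0 := by linarith
    simp only [Real.rpow_zero]
    split_ifs <;> simp [this]
  rw [integral_congr_ae (Filter.Eventually.of_forall h)]
  refine (int_prod d (fun j s => if x j < s then s ^ (0:ℝ) else 0)).trans ?_
  refine Finset.prod_congr rfl fun j _ => ?_
  rw [int_one 0 (x j) le_rfl (hx j).1 (hx j).2.le]
  simp

lemma int_Fk_g (p : ℝ) (hp : 1 < p) {d : ℕ} (x : Fin d → ℝ)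
    (hx : ∀ j, x j ∈ Set.Ico (0:ℝ) 1) :
    ∫ t in Set.Icc (0 : Fin d → ℝ) 1, Fk x t * ∏ j, t j ^ (p - 1) = ∏ j, ((1 - x j ^ p) / p) := by
  have h : ∀ t : Fin d → ℝ, Fk x t * ∏ j, t j ^ (p - 1) =
      ∏ j, (fun (j : Fin d) (s : ℝ) => if x j < s then s ^ (p - 1) else 0) j (t j) := by
    intro t
    unfold Fk
    rw [← Finset.prod_mul_distrib]
    refine Finset.prod_congr rfl fun j _ => ?_
    simp only [ite_mul, one_mul, zero_mul]
  rw [integral_congr_ae (Filter.Eventually.of_forall h)]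
  refine (int_prod d (fun j s => if x j < s then s ^ (p - 1) else 0)).trans ?_
  refine Finset.prod_congr rfl fun j _ => ?_
  rw [int_one (p - 1) (x j) (by linarith) (hx j).1 (hx j).2.le]
  simp

lemma int_pow (p : ℝ) (hp : 1 < p) (d : ℕ) :
    ∫ t in Set.Icc (0 : Fin d → ℝ) 1, ∏ j, t j ^ p = (1 / (p + 1)) ^ d := by
  have := int_prod d (fun _ s => s ^ p)
  rw [this, int_full p (by linarith)]
  simp

lemma lowerP (p : ℝ) (hp : 1 < p) (d N : ℕ) (hN : 0 < N) (P : Fin N → Fin d → ℝ)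
    (hP : ∀ k j, P k j ∈ Set.Ico (0:ℝ) 1) :
    (1 - N * KK p ^ d) / 2 * (1 / (p + 1) ^ ((d : ℝ) / p)) ≤ LpDiscrepancy p d N P := by
  have hp0 : 0 < p := by linarith
  have hp1 : 0 < p + 1 := by linarith
  have hN' : (0:ℝ) < N := by exact_mod_cast hN
  obtain ⟨k0, -⟩ := KK_pow p hp
  set μ := (volume : Measure (Fin d → ℝ)).restrict (Set.Icc (0 : Fin d → ℝ) 1) with hμ
  set F : (Fin d → ℝ) → ℝ := fun t => (∑ k, Fk (P k) t) / N with hF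
  set G : (Fin d → ℝ) → ℝ := fun t => ∏ j, t j with hG
  set g : (Fin d → ℝ) → ℝ := fun t => ∏ j, t j ^ (p - 1) with hg
  set D := LpDiscrepancy p d N P with hD
  have hDeq : D = (∫ t, |F t - G t| ^ p ∂μ) ^ (1 / p) := by
    rw [hD]
    unfold LpDiscrepancy
    simp_rw [card_eq]
    rfl
  set e0 : ℝ := 1 / (p + 1) ^ ((d : ℝ) / p) with he0
  have he0pos : 0 < e0 := by positivity
  have mF : Measurable F :=
    (Finset.measurable_sum _ fun k _ => Fk_meas (P k)).div_const _
  have mG : Measurable G := Finset.measurable_prod _ fun j _ => measurable_pi_apply j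
  have mg : Measurable g := Finset.measurable_prod _ fun j _ => (measurable_pi_apply j).pow_const _
  have F0 : ∀ t, 0 ≤ F t := fun t =>
    div_nonneg (Finset.sum_nonneg fun k _ => (Fk_mem _ _).1) hN'.le
  have F1 : ∀ t, F t ≤ 1 := by
    intro t
    rw [hF]
    simp only
    rw [div_le_one hN']
    calc ∑ k, Fk (P k) t ≤ ∑ k : Fin N, (1:ℝ) := Finset.sum_le_sum fun k _ => (Fk_mem _ _).2
      _ = N := by simp
  have g01 : ∀ t ∈ Set.Icc (0 : Fin d → ℝ) 1, 0 ≤ g t ∧ g t ≤ 1 := by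
    intro t ht
    exact ⟨Finset.prod_nonneg fun j _ => Real.rpow_nonneg (ht.1 j) _,
      Finset.prod_le_one (fun j _ => Real.rpow_nonneg (ht.1 j) _)
        fun j _ => Real.rpow_le_one (ht.1 j) (ht.2 j) (by linarith)⟩
  have LF : ∀ q, MemLp F q μ := fun q => memLp_cube d q F mF fun t _ => by
    rw [abs_of_nonneg (F0 t)]; exact F1 t
  have LG : ∀ q, MemLp G q μ := fun q => memLp_cube d q G mG fun t ht => by
    rw [abs_of_nonneg (cube_prod_mem d t ht).1]; exact (cube_prod_mem d t ht).2
  have Lg : ∀ q, MemLp g q μ := fun q => memLp_cube d q g mg fun t ht => by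
    rw [abs_of_nonneg (g01 t ht).1]; exact (g01 t ht).2
  have LFk : ∀ x q, MemLp (Fk x) q μ := fun x q => memLp_cube d q _ (Fk_meas x) fun t _ => by
    rw [abs_of_nonneg (Fk_mem x t).1]; exact (Fk_mem x t).2
  have intmul : ∀ f h : (Fin d → ℝ) → ℝ, (∀ q, MemLp f q μ) → (∀ q, MemLp h q μ) →
      Integrable (fun t => f t * h t) μ := fun f h hf hh => (hf 2).integrable_mul (hh 2)
  have nG : (∫ t, |G t| ^ p ∂μ) ^ (1 / p) = e0 := by
    have : ∫ t, |G t| ^ p ∂μ = ∫ t, ∏ j, t j ^ p ∂μ := by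
      apply setIntegral_congr_fun measurableSet_Icc
      intro t ht
      simp only
      rw [abs_of_nonneg (cube_prod_mem d t ht).1, ← Real.finsetProd_rpow _ _ (fun j _ => ht.1 j)]
    rw [this, hμ, int_pow p hp, he0, one_div, one_div, one_div, inv_pow, ← Real.rpow_natCast,
      Real.inv_rpow (by positivity), ← Real.rpow_mul hp1.le]
    rfl
  have iGg : ∫ t, G t * g t ∂μ = (1 / (p + 1)) ^ d := by
    rw [← int_pow p hp]
    apply setIntegral_congr_fun measurableSet_Icc
    intro t ht
    simp only [hG, hg]
    rw [← Finset.prod_mul_distrib]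
    refine Finset.prod_congr rfl fun j _ => ?_
    rcases (ht.1 j).eq_or_lt with h | h
    · rw [← h]; simp [Real.zero_rpow hp0.ne']
    · rw [Real.rpow_sub_one h.ne']
      have h' : t j ≠ 0 := h.ne'
      field_simp
  have hpq : p.HolderConjugate (p / (p - 1)) := Real.HolderConjugate.conjExponent hp
  set q := p / (p - 1) with hq
  have hq0 : 0 < q := hpq.symm.pos
  have ng : (∫ t, |g t| ^ q ∂μ) ^ (1 / q) = ((1 / (p + 1)) ^ d) ^ (1 - 1 / p) := by
    have : ∫ t, |g t| ^ q ∂μ = ∫ t, ∏ j, t j ^ p ∂μ := by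
      apply setIntegral_congr_fun measurableSet_Icc
      intro t ht
      simp only
      rw [abs_of_nonneg (g01 t ht).1, hg,
        ← Real.finsetProd_rpow _ _ (fun j _ => Real.rpow_nonneg (ht.1 j) _)]
      refine Finset.prod_congr rfl fun j _ => ?_
      rw [← Real.rpow_mul (ht.1 j)]
      congr 1
      rw [hq]
      have : p - 1 ≠ 0 := by linarith
      field_simp
    rw [this, hμ, int_pow p hp]
    congr 1
    rw [hq]
    have : p - 1 ≠ 0 := by linarith
    field_simp
  have H1 : (1 / (p + 1)) ^ d - ∫ t, F t * g t ∂μ ≤ D * ((1 / (p + 1)) ^ d) ^ (1 - 1 / p) := by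
    have e1 : (1 / (p + 1)) ^ d - ∫ t, F t * g t ∂μ = ∫ t, (G t * g t - F t * g t) ∂μ := by
      rw [← iGg, ← integral_sub (intmul G g LG Lg) (intmul F g LF Lg)]
    rw [e1, hDeq]
    have hh := integral_mul_norm_le_Lp_mul_Lq (μ := μ) hpq (f := fun t => F t - G t) (g := g)
      ((LF _).sub (LG _)) (Lg _)
    simp only [Real.norm_eq_abs] at hh
    rw [ng] at hh
    refine le_trans ?_ hh
    apply integral_mono ((intmul G g LG Lg).sub (intmul F g LF Lg))
    · have := (intmul (fun t => F t - G t) g (fun q => (LF q).sub (LG q)) Lg).abs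
      simpa [abs_mul] using this
    · intro t
      simp only [Pi.sub_apply]
      rw [← abs_mul, ← sub_mul, ← abs_neg, ← neg_mul, neg_sub]
      exact le_abs_self _
  have H2 : ∀ k, (∫ t, |Fk (P k) t| ^ p ∂μ) ^ (1 / p) ≤ N * (D + e0) := by
    intro k
    have tri := nrm_tri (μ := μ) p hp F G (LF _) (LG _)
    rw [nG, ← hDeq] at tri
    have mono : (∫ t, |Fk (P k) t| ^ p ∂μ) ^ (1 / p) ≤ (∫ t, (N * |F t|) ^ p ∂μ) ^ (1 / p) := by
      apply Real.rpow_le_rpow (integral_nonneg fun t => by positivity) _ (by positivity)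
      have i1 : ∀ f : (Fin d → ℝ) → ℝ, MemLp f (ENNReal.ofReal p) μ →
          Integrable (fun t => |f t| ^ p) μ := by
        intro f hf
        have := hf.integrable_norm_rpow (by simpa using hp0) ENNReal.ofReal_ne_top
        simpa [ENNReal.toReal_ofReal hp0.le] using this
      apply integral_mono (i1 _ (LFk _ _))
      · have := (i1 _ (LF (ENNReal.ofReal p))).const_mul ((N:ℝ) ^ p)
        refine this.congr (Filter.Eventually.of_forall fun t => ?_)
        simp only
        rw [Real.mul_rpow hN'.le (abs_nonneg _)]
      · intro t
        simp only
        apply Real.rpow_le_rpow (abs_nonneg _) _ hp0.le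
        rw [abs_of_nonneg (Fk_mem _ _).1, abs_of_nonneg (F0 t), hF]
        simp only
        rw [mul_div_cancel₀ _ hN'.ne']
        exact Finset.single_le_sum (f := fun k => Fk (P k) t) (fun k _ => (Fk_mem _ _).1)
          (Finset.mem_univ k)
    refine mono.trans ?_
    have : ∀ t, (N * |F t|) ^ p = (N:ℝ) ^ p * |F t| ^ p :=
      fun t => Real.mul_rpow hN'.le (abs_nonneg _)
    simp_rw [this]
    rw [integral_const_mul, Real.mul_rpow (by positivity) (integral_nonneg fun t => by positivity),
      ← Real.rpow_mul hN'.le, mul_one_div_cancel hp0.ne', Real.rpow_one]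
    exact mul_le_mul_of_nonneg_left tri hN'.le
  have H3 : ∫ t, F t * g t ∂μ ≤ N * (D + e0) * (KK p ^ d * ((p + 1) ^ (1 / p - 1)) ^ d) := by
    have e : ∫ t, F t * g t ∂μ = (∑ k, ∫ t, Fk (P k) t * g t ∂μ) / N := by
      rw [← integral_finsetSum _ (fun k _ => intmul _ _ (LFk _) Lg), ← integral_div]
      congr 1
      ext t
      simp only [hF]
      rw [← Finset.sum_mul]
      ring
    rw [e, div_le_iff₀ hN']
    have each : ∀ k, ∫ t, Fk (P k) t * g t ∂μ ≤
        N * (D + e0) * (KK p ^ d * ((p + 1) ^ (1 / p - 1)) ^ d) := by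
      intro k
      rw [hμ, int_Fk_g p hp (P k) (hP k)]
      calc ∏ j, ((1 - P k j ^ p) / p)
          ≤ ∏ j, (KK p * (1 - P k j) ^ (1 / p) * (p + 1) ^ (1 / p - 1)) := by
            apply Finset.prod_le_prod
            · intro j _
              have := Real.rpow_le_one (hP k j).1 (hP k j).2.le hp0.le
              exact div_nonneg (by linarith) hp0.le
            · exact fun j _ => one_dim p _ hp (hP k j).1 (hP k j).2
        _ = (∏ j, (1 - P k j)) ^ (1 / p) * (KK p ^ d * ((p + 1) ^ (1 / p - 1)) ^ d) := by
            rw [← Real.finsetProd_rpow _ _ (fun j _ => by linarith [(hP k j).2]),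
              Finset.prod_mul_distrib, Finset.prod_mul_distrib]
            simp
            ring
        _ ≤ _ := by
            apply mul_le_mul_of_nonneg_right _ (by positivity)
            have := H2 k
            rwa [hμ, int_Fk_pow p hp (P k) (hP k)] at this
    calc _ ≤ ∑ k : Fin N, N * (D + e0) * (KK p ^ d * ((p + 1) ^ (1 / p - 1)) ^ d) :=
          Finset.sum_le_sum fun k _ => each k
      _ = _ := by simp; ring
  have D0 : 0 ≤ D := by
    rw [hDeq]; exact Real.rpow_nonneg (integral_nonneg fun t => by positivity) _
  set A : ℝ := ((p + 1) ^ (1 / p - 1)) ^ d with hA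
  have hApos : 0 < A := by positivity
  have eA : ((1 / (p + 1)) ^ d) ^ (1 - 1 / p) = A := by
    rw [hA, one_div, inv_pow, Real.inv_rpow (by positivity), ← Real.rpow_neg (by positivity),
      ← Real.rpow_natCast, ← Real.rpow_natCast, ← Real.rpow_mul hp1.le, ← Real.rpow_mul hp1.le]
    congr 1
    ring
  have eB : (1 / (p + 1)) ^ d = e0 * A := by
    rw [hA, he0, one_div, one_div, inv_pow, ← Real.rpow_natCast, ← Real.rpow_natCast,
      ← Real.rpow_neg hp1.le, ← Real.rpow_neg hp1.le, ← Real.rpow_mul hp1.le, ← Real.rpow_add hp1]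
    congr 1
    field_simp
    ring
  rw [eA, eB] at H1
  have H4 : e0 - D ≤ N * KK p ^ d * (D + e0) := by
    have : (e0 - D) * A ≤ (N * KK p ^ d * (D + e0)) * A := by linarith
    exact le_of_mul_le_mul_right this hApos
  set M : ℝ := N * KK p ^ d
  by_contra hcon
  push Not at hcon
  have h5 : 2 * D < (1 - M) * e0 := by linarith
  have h6 : M * e0 < e0 - 2 * D := by linarith
  have h7 : M * e0 * (D + e0) ≤ (e0 - 2 * D) * (D + e0) :=
    mul_le_mul_of_nonneg_right h6.le (by linarith)
  have h8 : M * e0 * (D + e0) < (e0 - 2 * D) * (D + e0) :=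
    mul_lt_mul_of_pos_right h6 (by linarith)
  have h9 := mul_le_mul_of_nonneg_left H4 he0pos.le
  nlinarith [sq_nonneg D]

lemma prod_diff {ι : Type*} (s : Finset ι) (a b : ι → ℝ) (ha : ∀ i ∈ s, 0 ≤ a i ∧ a i ≤ 1)
    (hb : ∀ i ∈ s, 0 ≤ b i ∧ b i ≤ 1) :
    |∏ i ∈ s, a i - ∏ i ∈ s, b i| ≤ ∑ i ∈ s, |a i - b i| := by
  classical
  induction s using Finset.induction_on with
  | empty => simp
  | insert i s hi ih =>
    rw [Finset.prod_insert hi, Finset.prod_insert hi, Finset.sum_insert hi]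
    have ih' := ih (fun j hj => ha j (Finset.mem_insert_of_mem hj))
      (fun j hj => hb j (Finset.mem_insert_of_mem hj))
    have hai := ha i (Finset.mem_insert_self i s)
    have hB0 : 0 ≤ ∏ j ∈ s, b j :=
      Finset.prod_nonneg fun j hj => (hb j (Finset.mem_insert_of_mem hj)).1
    have hB1 : ∏ j ∈ s, b j ≤ 1 :=
      Finset.prod_le_one (fun j hj => (hb j (Finset.mem_insert_of_mem hj)).1)
        fun j hj => (hb j (Finset.mem_insert_of_mem hj)).2
    have e : a i * ∏ j ∈ s, a j - b i * ∏ j ∈ s, b j =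
        (a i - b i) * ∏ j ∈ s, b j + a i * (∏ j ∈ s, a j - ∏ j ∈ s, b j) := by ring
    rw [e]
    refine (abs_add_le _ _).trans ?_
    rw [abs_mul, abs_mul, abs_of_nonneg hB0, abs_of_nonneg hai.1]
    have h1 : |a i - b i| * ∏ j ∈ s, b j ≤ |a i - b i| := mul_le_of_le_one_right (abs_nonneg _) hB1
    have h2 : a i * |∏ j ∈ s, a j - ∏ j ∈ s, b j| ≤ |∏ j ∈ s, a j - ∏ j ∈ s, b j| :=
      mul_le_of_le_one_left (abs_nonneg _) hai.2
    linarith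

lemma count_one (n : ℕ) (hn : 0 < n) (s : ℝ) (hs : 0 ≤ s ∧ s ≤ 1) :
    ∑ i : Fin n, (if ((i : ℕ) : ℝ) / n < s then (1:ℝ) else 0) = (⌈(n : ℝ) * s⌉₊ : ℝ) := by
  have hn' : (0:ℝ) < n := by exact_mod_cast hn
  rw [Fin.sum_univ_eq_sum_range (fun i : ℕ => if (i : ℝ) / n < s then (1:ℝ) else 0) n,
    Finset.sum_boole]
  congr 1
  have : (Finset.range n).filter (fun i : ℕ => (i : ℝ) / n < s) = Finset.range ⌈(n : ℝ) * s⌉₊ := by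
    ext i
    simp only [Finset.mem_filter, Finset.mem_range, Nat.lt_ceil, div_lt_iff₀ hn', mul_comm s]
    constructor
    · exact fun h => h.2
    · intro h
      refine ⟨?_, h⟩
      have : (i : ℝ) < n := lt_of_lt_of_le h (by nlinarith [hs.2])
      exact_mod_cast this
  rw [this, Finset.card_range]

lemma grid (p : ℝ) (hp : 1 < p) (d n : ℕ) (hn : 0 < n) :
    ∃ P : Fin (n ^ d) → Fin d → ℝ, (∀ k j, P k j ∈ Set.Ico (0:ℝ) 1) ∧
      LpDiscrepancy p d (n ^ d) P ≤ d / n := by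
  have hp0 : 0 < p := by linarith
  have hn' : (0:ℝ) < n := by exact_mod_cast hn
  refine ⟨fun k j => ((finFunctionFinEquiv.symm k j : ℕ) : ℝ) / n, ?_, ?_⟩
  · intro k j
    refine ⟨by positivity, ?_⟩
    rw [div_lt_one hn']
    exact_mod_cast (finFunctionFinEquiv.symm k j).2
  · have pt : ∀ t ∈ Set.Icc (0 : Fin d → ℝ) 1,
        |((Finset.univ.filter (fun k : Fin (n ^ d) => ∀ j,
          ((finFunctionFinEquiv.symm k j : ℕ) : ℝ) / n < t j)).card : ℝ) / (n ^ d : ℕ)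
            - ∏ j, t j| ≤ d / n := by
      intro t ht
      rw [card_eq (fun (k : Fin (n ^ d)) j => ((finFunctionFinEquiv.symm k j : ℕ) : ℝ) / n) t]
      have e1 : ∑ k : Fin (n ^ d), Fk (fun j => ((finFunctionFinEquiv.symm k j : ℕ) : ℝ) / n) t =
          ∑ i : Fin d → Fin n, Fk (fun j => ((i j : ℕ) : ℝ) / n) t :=
        Equiv.sum_comp finFunctionFinEquiv.symm
          (fun i : Fin d → Fin n => Fk (fun j => ((i j : ℕ) : ℝ) / n) t)
      have e2 : ∑ i : Fin d → Fin n, Fk (fun j => ((i j : ℕ) : ℝ) / n) t =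
          ∏ j, (⌈(n : ℝ) * t j⌉₊ : ℝ) := by
        unfold Fk
        rw [Finset.prod_congr rfl (fun j _ => (count_one n hn (t j) ⟨ht.1 j, ht.2 j⟩).symm),
          Finset.prod_univ_sum]
        simp
      rw [e1, e2]
      have e3 : (∏ j, (⌈(n : ℝ) * t j⌉₊ : ℝ)) / (n ^ d : ℕ) = ∏ j, ((⌈(n : ℝ) * t j⌉₊ : ℝ) / n) := by
        rw [Finset.prod_div_distrib]
        simp
      rw [e3]
      have c1 : ∀ j, (n : ℝ) * t j ≤ ⌈(n : ℝ) * t j⌉₊ := fun j => Nat.le_ceil _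
      have c2 : ∀ j, (⌈(n : ℝ) * t j⌉₊ : ℝ) < (n : ℝ) * t j + 1 := fun j =>
        Nat.ceil_lt_add_one (mul_nonneg hn'.le (ht.1 j))
      have c3 : ∀ j, (⌈(n : ℝ) * t j⌉₊ : ℝ) ≤ n := by
        intro j
        have : ⌈(n : ℝ) * t j⌉₊ ≤ n := Nat.ceil_le.2 (mul_le_of_le_one_right hn'.le (ht.2 j))
        exact_mod_cast this
      refine (prod_diff _ _ _ (fun j _ => ⟨by positivity, (div_le_one hn').2 (c3 j)⟩)
        (fun j _ => ⟨ht.1 j, ht.2 j⟩)).trans ?_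
      calc ∑ j, |(⌈(n : ℝ) * t j⌉₊ : ℝ) / n - t j| ≤ ∑ j : Fin d, 1 / (n : ℝ) := by
            apply Finset.sum_le_sum
            intro j _
            have e : (⌈(n : ℝ) * t j⌉₊ : ℝ) / n - t j = (⌈(n : ℝ) * t j⌉₊ - n * t j) / n := by
              field_simp
            rw [e, abs_div, abs_of_pos hn']
            apply div_le_div_of_nonneg_right _ hn'.le
            rw [abs_le]
            constructor <;> linarith [c1 j, c2 j]
        _ = d / n := by simp; rfl
    unfold LpDiscrepancy
    have hb : (0:ℝ) ≤ d / n := by positivity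
    have hvol : (volume : Measure (Fin d → ℝ)).real (Set.Icc (0 : Fin d → ℝ) 1) = 1 := by
      rw [measureReal_def, Real.volume_Icc_pi_toReal zero_le_one]
      simp
    have hi : ∫ t in Set.Icc (0 : Fin d → ℝ) 1,
        |((Finset.univ.filter (fun k : Fin (n ^ d) => ∀ j,
          ((finFunctionFinEquiv.symm k j : ℕ) : ℝ) / n < t j)).card : ℝ) / (n ^ d : ℕ)
            - ∏ j, t j| ^ p ≤ ((d : ℝ) / n) ^ p := by
      have := norm_setIntegral_le_of_norm_le_const (μ := volume) (s := Set.Icc (0 : Fin d → ℝ) 1)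
        (C := ((d : ℝ) / n) ^ p) (f := fun t =>
        |((Finset.univ.filter (fun k : Fin (n ^ d) => ∀ j,
          ((finFunctionFinEquiv.symm k j : ℕ) : ℝ) / n < t j)).card : ℝ) / (n ^ d : ℕ)
            - ∏ j, t j| ^ p) isCompact_Icc.measure_lt_top (by
          intro t ht
          rw [Real.norm_of_nonneg (by positivity)]
          exact Real.rpow_le_rpow (abs_nonneg _) (pt t ht) hp0.le)
      rw [hvol, mul_one] at this
      exact (le_abs_self _).trans this
    have := Real.rpow_le_rpow (integral_nonneg fun t => by positivity) hi
      (show 0 ≤ 1 / p by positivity)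
    rwa [← Real.rpow_mul hb, mul_one_div_cancel hp0.ne', Real.rpow_one] at this

theorem curse_of_dimensionality_Lp_discrepancy (p : ℝ) (hp : 1 < p)
    (d : ℕ) (hd : 1 ≤ d) (ε : ℝ) (hε : ε ∈ Set.Ioo (0:ℝ) (1/2)) :
    ((1 / 2 + ((p + 1) / p) * (1 + 2 ^ (p / (p + 1)) - 2 ^ (1 / (p + 1))) / 4)⁻¹) ^ d
        * (1 - 2 * ε)
      ≤ (invLpDiscrepancy p ε d : ℝ) := by
  change ((KK p)⁻¹) ^ d * (1 - 2 * ε) ≤ _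
  have hp1 : 0 < p + 1 := by linarith
  obtain ⟨k0, -⟩ := KK_pow p hp
  set e0 : ℝ := 1 / (p + 1) ^ ((d : ℝ) / p) with he0
  have he0pos : 0 < e0 := by positivity
  have hne : {N : ℕ | 0 < N ∧ minLpDiscrepancy p N d ≤ ε * e0}.Nonempty := by
    have hpos : 0 < ε * e0 := mul_pos hε.1 he0pos
    obtain ⟨n, hn⟩ := exists_nat_gt ((d : ℝ) / (ε * e0))
    have hn' : (0:ℝ) < n := lt_of_le_of_lt (by positivity) hn
    have hn0 : 0 < n := by exact_mod_cast hn'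
    obtain ⟨P, hP, hPd⟩ := grid p hp d n hn0
    refine ⟨n ^ d, by positivity, ?_⟩
    have h1 : minLpDiscrepancy p (n ^ d) d ≤ LpDiscrepancy p d (n ^ d) P := by
      apply csInf_le
      · refine ⟨0, ?_⟩
        rintro _ ⟨Q, -, rfl⟩
        exact Real.rpow_nonneg (integral_nonneg fun t => by positivity) _
      · exact ⟨P, hP, rfl⟩
    refine h1.trans (hPd.trans ?_)
    rw [div_lt_iff₀ hpos] at hn
    rw [div_le_iff₀ hn']
    linarith
  have hmem := Nat.sInf_mem hne
  have hdef : invLpDiscrepancy p ε d = sInf {N : ℕ | 0 < N ∧ minLpDiscrepancy p N d ≤ ε * e0} := rfl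
  rw [← hdef] at hmem
  set N := invLpDiscrepancy p ε d
  obtain ⟨hN, hle⟩ := hmem
  have hlow : (1 - N * KK p ^ d) / 2 * e0 ≤ minLpDiscrepancy p N d := by
    apply le_csInf
    · exact ⟨_, ⟨fun _ _ => 0, by intro k j; simp, rfl⟩⟩
    · rintro _ ⟨P, hP, rfl⟩
      exact lowerP p hp d N hN P hP
  have h3 : (1 - N * KK p ^ d) / 2 ≤ ε := le_of_mul_le_mul_right (hlow.trans hle) he0pos
  rw [inv_pow, inv_mul_le_iff₀ (by positivity)]
  linarith
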